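/- The intersection of the Markov spectrum M with the open interval (10√718341/2819, (14264157401+16294182√718341)/9321104530) consists of exactly one point, namely √145/4, which is therefore an isolated point of M. Moreover, both endpoints 10√718341/2819 and (14264157401+16294182√718341)/9321104530 belong to M. -/

import Mathlib

open Filter Set MeasureTheory
open scoped ENNReal

/-- Finite continued fraction `[a 0; a 1, ..., a n]`. -/
noncomputable def cfConv : (ℕ → ℝ) → ℕ → ℝ
  | a, 0 => a 0
  | a, n + 1 => a 0 + 1 / cfConv (fun i => a (i + 1)) n

/-- Value of the infinite continued fraction `[a 0; a 1, a 2, ...]`,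
as the limit of its convergents. -/
noncomputable def cfVal (a : ℕ → ℝ) : ℝ := limUnder atTop (cfConv a)

/-- `λ_k(α) = [α_k; α_{k+1}, ...] + [0; α_{k-1}, α_{k-2}, ...]`. -/
noncomputable def lambdaVal (α : ℤ → ℕ) (k : ℤ) : ℝ :=
  cfVal (fun n => (α (k + n) : ℝ)) +
  cfVal (fun n => if n = 0 then 0 else (α (k - n) : ℝ))

/-- The Markov value `m(α) = sup_{k ∈ ℤ} λ_k(α)`. -/
noncomputable def markovValue (α : ℤ → ℕ) : ℝ := ⨆ k : ℤ, lambdaVal α k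

/-- The Markov spectrum. -/
def markovSpectrum : Set ℝ :=
  { x | ∃ α : ℤ → ℕ, (∀ n, 0 < α n) ∧ BddAbove (range (lambdaVal α)) ∧
      markovValue α = x }

/-- The dimension function `d(t) = dim_H (M ∩ (-∞, t))`. -/
noncomputable def dimFun (t : ℝ) : ℝ≥0∞ := dimH (markovSpectrum ∩ Iio t)

/-! ### Convergence of continued fractions -/

theorem one_le_cfConv (n : ℕ) : ∀ a : ℕ → ℝ, (∀ i, 1 ≤ a i) → 1 ≤ cfConv a n := by
  induction n with
  | zero => exact fun a h => h 0
  | succ n ih =>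
    intro a h
    have h1 := ih (fun i => a (i + 1)) fun i => h (i + 1)
    have h2 : 0 < 1 / cfConv (fun i => a (i + 1)) n := by positivity
    have h3 := h 0
    simp only [cfConv]
    linarith

theorem abs_sub_cfConv_zero_le (a : ℕ → ℝ) (h : ∀ i, 1 ≤ a i) (m : ℕ) :
    |a 0 - cfConv a m| ≤ 1 := by
  cases m with
  | zero => simp [cfConv]
  | succ m =>
    have h1 := one_le_cfConv m (fun i => a (i + 1)) fun i => h (i + 1)
    simp only [cfConv]
    rw [sub_add_cancel_left, abs_neg, abs_of_pos (by positivity)]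
    exact (div_le_one (by linarith)).2 h1

theorem abs_one_div_sub_one_div_le {x y : ℝ} (hx : 1 ≤ x) (hy : 1 ≤ y) :
    |1 / x - 1 / y| ≤ |x - y| := by
  rw [div_sub_div _ _ (by positivity) (by positivity), abs_div,
    abs_of_pos (a := x * y) (by positivity)]
  have : |1 * y - x * 1| = |x - y| := by rw [one_mul, mul_one, abs_sub_comm]
  rw [this]
  exact div_le_self (abs_nonneg _) (by nlinarith)

theorem abs_two_step_le {a x y : ℝ} (ha : 1 ≤ a) (hx : 1 ≤ x) (hy : 1 ≤ y) :
    |1 / (a + 1 / x) - 1 / (a + 1 / y)| ≤ |x - y| / 4 := by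
  have hx0 : 0 < x := by linarith
  have hy0 : 0 < y := by linarith
  have e : 1 / (a + 1 / x) - 1 / (a + 1 / y) = (x - y) / ((a * x + 1) * (a * y + 1)) := by
    field_simp
    ring
  have hp : 4 ≤ (a * x + 1) * (a * y + 1) := by
    have h1 : 2 ≤ a * x + 1 := by nlinarith
    have h2 : 2 ≤ a * y + 1 := by nlinarith
    nlinarith
  rw [e, abs_div, abs_of_pos (a := (a * x + 1) * (a * y + 1)) (by linarith)]
  exact div_le_div_of_nonneg_left (abs_nonneg _) (by norm_num) hp

theorem abs_cfConv_sub_le (m : ℕ) : ∀ (n : ℕ) (a : ℕ → ℝ), (∀ i, 1 ≤ a i) →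
    |cfConv a n - cfConv a (n + m)| ≤ 2 * (1 / 2) ^ n
  | 0, a, h => by
    have := abs_sub_cfConv_zero_le a h m
    simp only [zero_add, pow_zero, cfConv]
    linarith
  | 1, a, h => by
    have h1 := abs_sub_cfConv_zero_le (fun i => a (i + 1)) (fun i => h (i + 1)) m
    have h2 := abs_one_div_sub_one_div_le (h 1)
      (one_le_cfConv m (fun i => a (i + 1)) fun i => h (i + 1))
    rw [add_comm 1 m]
    simp only [cfConv, add_sub_add_left_eq_sub, zero_add] at h1 h2 ⊢
    linarith
  | n + 2, a, h => by
    have hs : ∀ i, 1 ≤ a (i + 2) := fun i => h (i + 2)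
    have h1 := abs_cfConv_sub_le m n (fun i => a (i + 2)) hs
    have h2 := abs_two_step_le (h 1) (one_le_cfConv n _ hs) (one_le_cfConv (n + m) _ hs)
    rw [show n + 2 + m = n + m + 2 by ring]
    simp only [cfConv, add_sub_add_left_eq_sub, zero_add, add_assoc, Nat.reduceAdd] at h1 h2 ⊢
    rw [pow_add]
    linarith

theorem tendsto_cfConv {a : ℕ → ℝ} (h : ∀ i, 1 ≤ a i) :
    Tendsto (cfConv a) atTop (nhds (cfVal a)) := by
  refine CauchySeq.tendsto_limUnder (cauchySeq_of_le_tendsto_0' (fun n => 2 * (1 / 2) ^ n) ?_ ?_)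
  · intro n m hnm
    obtain ⟨d, rfl⟩ := Nat.exists_eq_add_of_le hnm
    exact abs_cfConv_sub_le d n a h
  · have := (tendsto_pow_atTop_nhds_zero_of_lt_one (r := (1 / 2 : ℝ)) (by norm_num)
      (by norm_num)).const_mul 2
    simpa using this

theorem one_le_cfVal {a : ℕ → ℝ} (h : ∀ i, 1 ≤ a i) : 1 ≤ cfVal a :=
  ge_of_tendsto' (tendsto_cfConv h) fun n => one_le_cfConv n a h

theorem cfVal_eq {a : ℕ → ℝ} (h : ∀ i, 1 ≤ a (i + 1)) :
    cfVal a = a 0 + 1 / cfVal (fun i => a (i + 1)) := by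
  have hv := one_le_cfVal h
  have := ((tendsto_cfConv h).inv₀ (by positivity)).const_add (a 0)
  refine Tendsto.limUnder_eq ((tendsto_add_atTop_iff_nat 1).1 ?_)
  simpa [cfConv] using this

/-! ### Tails of bi-infinite sequences -/

/-- The sequence read backwards. -/
def revSeq (α : ℤ → ℕ) : ℤ → ℕ := fun n => α (-n)

/-- `[α_k; α_{k+1}, ...]`. -/
noncomputable def tailVal (α : ℤ → ℕ) (k : ℤ) : ℝ := cfVal fun n => (α (k + n) : ℝ)

theorem revSeq_revSeq (α : ℤ → ℕ) : revSeq (revSeq α) = α := by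
  funext n
  simp [revSeq]

theorem revSeq_pos {α : ℤ → ℕ} (h : ∀ n, 0 < α n) (n : ℤ) : 0 < revSeq α n := h _

theorem one_le_tailVal {α : ℤ → ℕ} (h : ∀ n, 0 < α n) (k : ℤ) : 1 ≤ tailVal α k :=
  one_le_cfVal fun i => by exact_mod_cast h (k + i)

theorem tailVal_pos {α : ℤ → ℕ} (h : ∀ n, 0 < α n) (k : ℤ) : 0 < tailVal α k :=
  zero_lt_one.trans_le (one_le_tailVal h k)

theorem tailVal_eq {α : ℤ → ℕ} (h : ∀ n, 0 < α n) (k : ℤ) :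
    tailVal α k = α k + 1 / tailVal α (k + 1) := by
  unfold tailVal
  rw [cfVal_eq fun i => by exact_mod_cast h _]
  simp [add_assoc, add_comm (1 : ℤ)]

theorem tailVal_congr {α β : ℤ → ℕ} {k l : ℤ} (h : ∀ n : ℕ, α (k + n) = β (l + n)) :
    tailVal α k = tailVal β l := by
  simp only [tailVal, h]

theorem lambdaVal_eq {α : ℤ → ℕ} (h : ∀ n, 0 < α n) (k : ℤ) :
    lambdaVal α k = tailVal α k + 1 / tailVal (revSeq α) (1 - k) := by
  unfold lambdaVal
  congr 1
  rw [cfVal_eq fun i => by rw [if_neg i.succ_ne_zero]; exact_mod_cast h _]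
  simp only [if_true, zero_add, Nat.add_eq_zero_iff, one_ne_zero, and_false, if_false, tailVal,
    revSeq]
  congr 3
  funext n
  congr 2
  push_cast
  ring

theorem lambdaVal_eq' {α : ℤ → ℕ} (h : ∀ n, 0 < α n) (k : ℤ) :
    lambdaVal α k = α k + 1 / tailVal α (k + 1) + 1 / tailVal (revSeq α) (1 - k) := by
  rw [lambdaVal_eq h, tailVal_eq h]

theorem lambdaVal_revSeq {α : ℤ → ℕ} (h : ∀ n, 0 < α n) (k : ℤ) :
    lambdaVal (revSeq α) (-k) = lambdaVal α k := by
  rw [lambdaVal_eq' h, lambdaVal_eq' (revSeq_pos h), revSeq_revSeq, revSeq, neg_neg,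
    show -k + 1 = 1 - k by ring, show 1 - -k = k + 1 by ring]
  ring

theorem lambdaVal_congr {α β : ℤ → ℕ} {k l : ℤ} (h : ∀ n : ℤ, α (k + n) = β (l + n)) :
    lambdaVal α k = lambdaVal β l := by
  simp only [lambdaVal, sub_eq_add_neg, h]

theorem tailVal_lt_add_one {α : ℤ → ℕ} (h : ∀ n, 0 < α n) (k : ℤ) :
    tailVal α k < α k + 1 := by
  have h1 : 1 < tailVal α (k + 1) := by
    rw [tailVal_eq h]
    have h2 : (1 : ℝ) ≤ α (k + 1) := by exact_mod_cast h _
    have h3 : 0 < 1 / tailVal α (k + 1 + 1) := one_div_pos.2 (tailVal_pos h _)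
    linarith
  rw [tailVal_eq h]
  have := (div_lt_one (zero_lt_one.trans h1)).2 h1
  linarith

theorem lt_tailVal {α : ℤ → ℕ} (h : ∀ n, 0 < α n) (k : ℤ) : α k < tailVal α k := by
  rw [tailVal_eq h]
  have h3 : 0 < 1 / tailVal α (k + 1) := one_div_pos.2 (tailVal_pos h _)
  linarith

/-- The position and sign of the first difference of two continued fractions. -/
theorem exists_first_diff {α β : ℤ → ℕ} (hα : ∀ n, 0 < α n) (hβ : ∀ n, 0 < β n) {k l : ℤ}
    (hlt : tailVal β l < tailVal α k) :
    ∃ j : ℕ, (∀ i < j, α (k + i) = β (l + i)) ∧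
      ((j % 2 = 0 ∧ β (l + j) < α (k + j)) ∨ (j % 2 = 1 ∧ α (k + j) < β (l + j))) := by
  have hex : ∃ j : ℕ, α (k + j) ≠ β (l + j) := by
    by_contra! hc
    exact hlt.ne' (tailVal_congr hc)
  classical
  obtain ⟨j, hj, hmin⟩ : ∃ j : ℕ, α (k + j) ≠ β (l + j) ∧ ∀ i < j, α (k + i) = β (l + i) :=
    ⟨Nat.find hex, Nat.find_spec hex, fun i hi => not_not.1 (Nat.find_min hex hi)⟩
  refine ⟨j, hmin, ?_⟩
  clear hex
  induction j generalizing α β k l with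
  | zero =>
    left
    refine ⟨rfl, ?_⟩
    by_contra! hc
    have h1 : α (k + (0 : ℕ)) + 1 ≤ β (l + (0 : ℕ)) := lt_of_le_of_ne hc hj
    simp only [Nat.cast_zero, add_zero] at h1
    have h2 : (α k : ℝ) + 1 ≤ β l := by exact_mod_cast h1
    linarith [tailVal_lt_add_one hα k, lt_tailVal hβ l]
  | succ j ih =>
    have h0 : α k = β l := by simpa using hmin 0 j.succ_pos
    have hlt' : tailVal α (k + 1) < tailVal β (l + 1) := by
      rw [tailVal_eq hα, tailVal_eq hβ, h0, add_lt_add_iff_left,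
        one_div_lt_one_div (tailVal_pos hβ _) (tailVal_pos hα _)] at hlt
      exact hlt
    have e1 : ∀ i : ℕ, α (k + 1 + i) = α (k + (i + 1 : ℕ)) := fun i => by
      push_cast; congr 1; ring
    have e2 : ∀ i : ℕ, β (l + 1 + i) = β (l + (i + 1 : ℕ)) := fun i => by
      push_cast; congr 1; ring
    have := ih hβ hα hlt' (by rw [e1, e2]; exact hj.symm)
      (fun i hi => by rw [e1, e2]; exact (hmin (i + 1) (by omega)).symm)
    rw [e1, e2] at this
    omega

/-! ### Finite words and bounds -/

/-- The word `w` occurs in `α` starting at position `k`. -/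
def Starts (α : ℤ → ℕ) : ℤ → List ℕ → Prop
  | _, [] => True
  | k, x :: w => α k = x ∧ Starts α (k + 1) w

theorem starts_append {α : ℤ → ℕ} {u v : List ℕ} : ∀ {k : ℤ},
    Starts α k (u ++ v) ↔ Starts α k u ∧ Starts α (k + u.length) v := by
  induction u with
  | nil => simp [Starts]
  | cons x u ih =>
    intro k
    simp only [List.cons_append, Starts, ih, List.length_cons, Nat.cast_add, Nat.cast_one,
      and_assoc, add_assoc, add_comm (1 : ℤ)]

theorem starts_concat {α : ℤ → ℕ} {w : List ℕ} {k : ℤ} {x : ℕ} (h : Starts α k w)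
    (hx : α (k + w.length) = x) : Starts α k (w ++ [x]) :=
  starts_append.2 ⟨h, hx, trivial⟩

theorem Starts.revSeq {α : ℤ → ℕ} {w : List ℕ} : ∀ {k : ℤ}, Starts α k w →
    Starts (revSeq α) (1 - k - w.length) w.reverse := by
  induction w with
  | nil => simp [Starts]
  | cons x w ih =>
    rintro k ⟨hx, hw⟩
    rw [List.reverse_cons, starts_append]
    have := ih hw
    have e1 : 1 - k - ((x :: w).length : ℤ) = 1 - (k + 1) - w.length := by
      simp only [List.length_cons, Nat.cast_add, Nat.cast_one]; ring
    rw [e1]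
    refine ⟨this, ?_, trivial⟩
    rw [List.length_reverse, _root_.revSeq, ← hx]
    congr 1
    ring

theorem Starts.of_isPrefixOf {α : ℤ → ℕ} {k : ℤ} {u w : List ℕ} (h : Starts α k w)
    (hu : u.isPrefixOf w = true) : Starts α k u := by
  obtain ⟨v, rfl⟩ : u <+: w := by simpa using hu
  exact (starts_append.1 h).1

theorem starts_ofFn {α : ℤ → ℕ} (f : ℕ → ℕ) : ∀ (n : ℕ) {k : ℤ},
    (∀ i < n, α (k + i) = f i) → Starts α k ((List.range n).map f)
  | 0, _, _ => trivial
  | n + 1, k, h => by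
    rw [List.range_succ, List.map_append, starts_append]
    refine ⟨starts_ofFn f n fun i hi => h i (by omega), ?_, trivial⟩
    simpa using h n (by omega)

/-- Fractions bounding, from below and from above, every continued fraction with partial
quotients in `{1, 2}` which begins with the given word. -/
def cfBounds : List ℕ → (ℕ × ℕ) × (ℕ × ℕ)
  | [] => ((15, 11), (41, 15))
  | x :: w =>
    ((x * (cfBounds w).2.1 + (cfBounds w).2.2, (cfBounds w).2.1),
      (x * (cfBounds w).1.1 + (cfBounds w).1.2, (cfBounds w).1.1))

theorem cfBounds_pos (w : List ℕ) : 0 < (cfBounds w).1.1 ∧ 0 < (cfBounds w).1.2 ∧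
    0 < (cfBounds w).2.1 ∧ 0 < (cfBounds w).2.2 := by
  induction w with
  | nil => simp [cfBounds]
  | cons x w ih =>
    obtain ⟨h1, h2, h3, h4⟩ := ih
    simp only [cfBounds]
    refine ⟨?_, h3, ?_, h1⟩ <;> positivity

theorem pos_of_digits {α : ℤ → ℕ} (h : ∀ n, α n = 1 ∨ α n = 2) (n : ℤ) : 0 < α n := by
  rcases h n with h | h <;> omega

theorem revSeq_digits {α : ℤ → ℕ} (h : ∀ n, α n = 1 ∨ α n = 2) (n : ℤ) :
    revSeq α n = 1 ∨ revSeq α n = 2 := h _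

theorem tailVal_mem_of_digits {α : ℤ → ℕ} (h : ∀ n, α n = 1 ∨ α n = 2) (k : ℤ) :
    (15 / 11 : ℝ) ≤ tailVal α k ∧ tailVal α k ≤ 41 / 15 := by
  have hp := pos_of_digits h
  have hd : ∀ n, (1 : ℝ) ≤ α n ∧ (α n : ℝ) ≤ 2 := fun n => by
    rcases h n with e | e <;> rw [e] <;> norm_num
  have up3 : ∀ n, tailVal α n ≤ 3 := fun n => by
    linarith [(tailVal_lt_add_one hp n), (hd n).2]
  have step_lo : ∀ c : ℝ, 0 < c → (∀ n, tailVal α n ≤ c) → ∀ n, 1 + 1 / c ≤ tailVal α n := by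
    intro c hc hu n
    rw [tailVal_eq hp]
    have := one_div_le_one_div_of_le (tailVal_pos hp _) (hu (n + 1))
    linarith [(hd n).1]
  have step_up : ∀ c : ℝ, 0 < c → (∀ n, c ≤ tailVal α n) → ∀ n, tailVal α n ≤ 2 + 1 / c := by
    intro c hc hu n
    rw [tailVal_eq hp]
    have := one_div_le_one_div_of_le hc (hu (n + 1))
    linarith [(hd n).2]
  have l1 := step_lo 3 (by norm_num) up3
  have u1 := step_up _ (by norm_num) l1
  have l2 := step_lo _ (by norm_num) u1
  have l3 : ∀ n, (15 / 11 : ℝ) ≤ tailVal α n := fun n => by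
    have := l2 n
    norm_num at this ⊢
    linarith
  have u3 := step_up _ (by norm_num) l3 k
  norm_num at u3
  exact ⟨l3 k, u3⟩

theorem tailVal_mem_cfBounds {α : ℤ → ℕ} (h : ∀ n, α n = 1 ∨ α n = 2) {w : List ℕ} :
    ∀ {k : ℤ}, Starts α k w →
      ((cfBounds w).1.1 : ℝ) / (cfBounds w).1.2 ≤ tailVal α k ∧
        tailVal α k ≤ ((cfBounds w).2.1 : ℝ) / (cfBounds w).2.2 := by
  induction w with
  | nil =>
    intro k _
    simpa [cfBounds] using tailVal_mem_of_digits h k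
  | cons x w ih =>
    rintro k ⟨hx, hw⟩
    obtain ⟨hl, hu⟩ := ih hw
    obtain ⟨h1, h2, h3, h4⟩ := cfBounds_pos w
    have hp := pos_of_digits h
    have ht := tailVal_pos hp (k + 1)
    rw [tailVal_eq hp, hx]
    simp only [cfBounds]
    push_cast
    generalize ((cfBounds w).1.1 : ℕ) = a at *
    generalize ((cfBounds w).1.2 : ℕ) = b at *
    generalize ((cfBounds w).2.1 : ℕ) = c at *
    generalize ((cfBounds w).2.2 : ℕ) = d at *
    have h1' : (0 : ℝ) < a := by exact_mod_cast h1
    have h2' : (0 : ℝ) < b := by exact_mod_cast h2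
    have h3' : (0 : ℝ) < c := by exact_mod_cast h3
    have h4' : (0 : ℝ) < d := by exact_mod_cast h4
    have i1 := one_div_le_one_div_of_le ht hu
    have i2 := one_div_le_one_div_of_le (by positivity) hl
    rw [one_div_div] at i1 i2
    have e1 : ((x : ℝ) * c + d) / c = x + d / c := by field_simp
    have e2 : ((x : ℝ) * a + b) / a = x + b / a := by field_simp
    rw [e1, e2]
    exact ⟨by linarith, by linarith⟩

/-- `α` reads `r` from position `k` onwards and `l` from position `k - 1` backwards. -/
def Around (α : ℤ → ℕ) (k : ℤ) (l r : List ℕ) : Prop :=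
  Starts α k r ∧ Starts (revSeq α) (1 - k) l

/-- Certificate that `λ_k ≥ N / D` whenever the sequence reads `l` and `r` around `k`. -/
def lambdaGe (N D : ℕ) (l r : List ℕ) : Bool :=
  Nat.ble (N * ((cfBounds r).1.2 * (cfBounds l).2.1))
    (D * ((cfBounds r).1.1 * (cfBounds l).2.1 + (cfBounds r).1.2 * (cfBounds l).2.2))

/-- Certificate that `λ_k ≤ N / D` whenever the sequence reads `l` and `r` around `k`. -/
def lambdaLe (N D : ℕ) (l r : List ℕ) : Bool :=
  Nat.ble (D * ((cfBounds r).2.1 * (cfBounds l).1.1 + (cfBounds r).2.2 * (cfBounds l).1.2))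
    (N * ((cfBounds r).2.2 * (cfBounds l).1.1))

theorem le_lambdaVal_of_lambdaGe {α : ℤ → ℕ} (h : ∀ n, α n = 1 ∨ α n = 2) {k : ℤ}
    {l r : List ℕ} (hm : Around α k l r) {N D : ℕ} (hD : 0 < D) (hc : lambdaGe N D l r = true) :
    (N : ℝ) / D ≤ lambdaVal α k := by
  have h1 := (tailVal_mem_cfBounds h hm.1).1
  have h2 := (tailVal_mem_cfBounds (revSeq_digits h) hm.2).2
  obtain ⟨-, hb, -, -⟩ := cfBounds_pos r
  obtain ⟨-, -, hp, hq⟩ := cfBounds_pos l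
  have hc' := Nat.le_of_ble_eq_true hc
  rw [lambdaVal_eq (pos_of_digits h)]
  generalize (cfBounds r).1.1 = a at *
  generalize (cfBounds r).1.2 = b at *
  generalize (cfBounds l).2.1 = p at *
  generalize (cfBounds l).2.2 = q at *
  have hb' : (0 : ℝ) < b := by exact_mod_cast hb
  have hp' : (0 : ℝ) < p := by exact_mod_cast hp
  have hq' : (0 : ℝ) < q := by exact_mod_cast hq
  have hD' : (0 : ℝ) < D := by exact_mod_cast hD
  have h3 := one_div_le_one_div_of_le
    (tailVal_pos (revSeq_pos (pos_of_digits h)) (1 - k)) h2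
  rw [one_div_div] at h3
  have h4 : (N : ℝ) / D ≤ a / b + q / p := by
    rw [div_add_div _ _ hb'.ne' hp'.ne', div_le_div_iff₀ hD' (by positivity)]
    have : (N : ℝ) * (b * p) ≤ D * (a * p + b * q) := by exact_mod_cast hc'
    linarith
  linarith

theorem lambdaVal_le_of_lambdaLe {α : ℤ → ℕ} (h : ∀ n, α n = 1 ∨ α n = 2) {k : ℤ}
    {l r : List ℕ} (hm : Around α k l r) {N D : ℕ} (hD : 0 < D) (hc : lambdaLe N D l r = true) :
    lambdaVal α k ≤ (N : ℝ) / D := by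
  have h1 := (tailVal_mem_cfBounds h hm.1).2
  have h2 := (tailVal_mem_cfBounds (revSeq_digits h) hm.2).1
  obtain ⟨-, -, -, hb⟩ := cfBounds_pos r
  obtain ⟨hp, hq, -, -⟩ := cfBounds_pos l
  have hc' := Nat.le_of_ble_eq_true hc
  rw [lambdaVal_eq (pos_of_digits h)]
  generalize (cfBounds r).2.1 = a at *
  generalize (cfBounds r).2.2 = b at *
  generalize (cfBounds l).1.1 = p at *
  generalize (cfBounds l).1.2 = q at *
  have hb' : (0 : ℝ) < b := by exact_mod_cast hb
  have hp' : (0 : ℝ) < p := by exact_mod_cast hp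
  have hq' : (0 : ℝ) < q := by exact_mod_cast hq
  have hD' : (0 : ℝ) < D := by exact_mod_cast hD
  have h3 := one_div_le_one_div_of_le (by positivity) h2
  rw [one_div_div] at h3
  have h4 : (a : ℝ) / b + q / p ≤ N / D := by
    rw [div_add_div _ _ hb'.ne' hp'.ne', div_le_div_iff₀ (by positivity) hD']
    have : (D : ℝ) * (a * p + b * q) ≤ N * (b * p) := by exact_mod_cast hc'
    linarith
  linarith

/-! ### Admissible sequences and the search for forced words -/

/-- Sequences with digits in `{1, 2}` all of whose values `λ_k` lie below the upper endpoint. -/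
structure Admissible (α : ℤ → ℕ) : Prop where
  digits : ∀ n, α n = 1 ∨ α n = 2
  lt : ∀ k, lambdaVal α k < (14264157401 + 16294182 * Real.sqrt 718341) / 9321104530

theorem Admissible.pos {α : ℤ → ℕ} (h : Admissible α) (n : ℤ) : 0 < α n := pos_of_digits h.digits n

theorem Admissible.revSeq {α : ℤ → ℕ} (h : Admissible α) : Admissible (revSeq α) :=
  ⟨revSeq_digits h.digits, fun k => by
    rw [← neg_neg k, lambdaVal_revSeq h.pos]
    exact h.lt _⟩

theorem sqrt_718341_bounds :
    847.5499985251 < Real.sqrt 718341 ∧ Real.sqrt 718341 < 847.5499985252 := by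
  constructor
  · exact Real.lt_sqrt_of_sq_lt (by norm_num)
  · rw [Real.sqrt_lt' (by norm_num)]
    norm_num

/-- Some position of `r` has a value `λ` above the upper endpoint. -/
def exceedsRight : List ℕ → List ℕ → Bool
  | _, [] => false
  | l, x :: r => lambdaGe 301190607194 100000000000 l (x :: r) || exceedsRight (x :: l) r

/-- Some position of `l` has a value `λ` above the upper endpoint. -/
def exceedsLeft : List ℕ → List ℕ → Bool
  | [], _ => false
  | x :: l, r => lambdaGe 301190607194 100000000000 l (x :: r) || exceedsLeft l (x :: r)

/-- Every admissible sequence reading `l` and `r` around a position reads there some pair of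
longer words satisfying `target`; certified by a search tree of depth `n`. -/
def forces (target : List ℕ → List ℕ → Bool) : ℕ → List ℕ → List ℕ → Bool
  | 0, l, r => exceedsRight l r || exceedsLeft l r || target l r
  | n + 1, l, r => exceedsRight l r || exceedsLeft l r || target l r ||
      (if n % 2 = 0 then forces target n (l ++ [1]) r && forces target n (l ++ [2]) r
        else forces target n l (r ++ [1]) && forces target n l (r ++ [2]))

theorem Around.move_right {α : ℤ → ℕ} {k : ℤ} {l r : List ℕ} {x : ℕ}
    (h : Around α k l (x :: r)) : Around α (k + 1) (x :: l) r :=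
  ⟨h.1.2, by simpa [revSeq] using h.1.1, by rw [show 1 - (k + 1) + 1 = 1 - k by ring]; exact h.2⟩

theorem Around.move_left {α : ℤ → ℕ} {k : ℤ} {l r : List ℕ} {x : ℕ}
    (h : Around α k (x :: l) r) : Around α (k - 1) l (x :: r) :=
  ⟨⟨by simpa [revSeq] using h.2.1, by simpa using h.1⟩,
    by have := h.2.2; rwa [show 1 - (k - 1) = 1 - k + 1 by ring]⟩

theorem Admissible.lambdaGe_false {α : ℤ → ℕ} (h : Admissible α) {k : ℤ} {l r : List ℕ}
    (hm : Around α k l r) : lambdaGe 301190607194 100000000000 l r ≠ true := by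
  intro hc
  have h1 := le_lambdaVal_of_lambdaGe h.digits hm (by norm_num) hc
  have h2 := h.lt k
  have h3 := sqrt_718341_bounds.2
  norm_num at h1 h2 h3
  linarith

theorem Admissible.exceedsRight_false {α : ℤ → ℕ} (h : Admissible α) {r : List ℕ} :
    ∀ {l : List ℕ} {k : ℤ}, Around α k l r → exceedsRight l r ≠ true := by
  induction r with
  | nil => simp [exceedsRight]
  | cons x r ih =>
    intro l k hm
    simp only [exceedsRight, ne_eq, Bool.or_eq_true, not_or]
    exact ⟨h.lambdaGe_false hm, ih hm.move_right⟩

theorem Admissible.exceedsLeft_false {α : ℤ → ℕ} (h : Admissible α) {l : List ℕ} :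
    ∀ {r : List ℕ} {k : ℤ}, Around α k l r → exceedsLeft l r ≠ true := by
  induction l with
  | nil => simp [exceedsLeft]
  | cons x l ih =>
    intro r k hm
    simp only [exceedsLeft, ne_eq, Bool.or_eq_true, not_or]
    exact ⟨h.lambdaGe_false hm.move_left, ih hm.move_left⟩

theorem Admissible.exists_of_forces {α : ℤ → ℕ} (h : Admissible α) {k : ℤ}
    (target : List ℕ → List ℕ → Bool) : ∀ (n : ℕ) (l r : List ℕ), Around α k l r →
    forces target n l r = true → ∃ l' r', Around α k l' r' ∧ target l' r' = true := by
  intro n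
  induction n with
  | zero =>
    intro l r hm hc
    simp only [forces, Bool.or_eq_true, h.exceedsRight_false hm, h.exceedsLeft_false hm,
      Bool.false_eq_true, false_or] at hc
    exact ⟨l, r, hm, hc⟩
  | succ n ih =>
    intro l r hm hc
    simp only [forces, Bool.or_eq_true, h.exceedsRight_false hm, h.exceedsLeft_false hm,
      Bool.false_eq_true, false_or] at hc
    rcases hc with hc | hc
    · exact ⟨l, r, hm, hc⟩
    · split_ifs at hc <;> rw [Bool.and_eq_true] at hc
      · rcases revSeq_digits h.digits (1 - k + l.length) with e | e
        · exact ih _ _ ⟨hm.1, starts_concat hm.2 e⟩ hc.1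
        · exact ih _ _ ⟨hm.1, starts_concat hm.2 e⟩ hc.2
      · rcases h.digits (k + r.length) with e | e
        · exact ih _ _ ⟨starts_concat hm.1 e, hm.2⟩ hc.1
        · exact ih _ _ ⟨starts_concat hm.1 e, hm.2⟩ hc.2

theorem Admissible.not_starts {α : ℤ → ℕ} (h : Admissible α) {w : List ℕ} {n : ℕ}
    (hc : forces (fun _ _ => false) n [] w = true) (k : ℤ) : ¬ Starts α k w := fun hw => by
  obtain ⟨_, _, _, hf⟩ := h.exists_of_forces _ n [] w ⟨hw, trivial⟩ hc
  exact Bool.false_ne_true hf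

theorem Around.starts {α : ℤ → ℕ} {k : ℤ} {l r : List ℕ} (h : Around α k l r) :
    Starts α (k - l.length) (l.reverse ++ r) := by
  refine starts_append.2 ⟨?_, ?_⟩
  · have := h.2.revSeq
    rwa [revSeq_revSeq, show 1 - (1 - k) - (l.length : ℤ) = k - l.length by ring] at this
  · rw [List.length_reverse, sub_add_cancel]
    exact h.1

/-! ### Continued fractions with a prescribed beginning as homographies -/

/-- The matrix of the homography `x ↦ [w₀; w₁, ..., x]`. -/
def cfMatrix : List ℕ → (ℕ × ℕ) × (ℕ × ℕ)
  | [] => ((1, 0), (0, 1))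
  | x :: w =>
    ((x * (cfMatrix w).1.1 + (cfMatrix w).2.1, x * (cfMatrix w).1.2 + (cfMatrix w).2.2),
      (cfMatrix w).1)

theorem tailVal_mul_cfMatrix {α : ℤ → ℕ} (h : ∀ n, 0 < α n) {w : List ℕ} : ∀ {k : ℤ},
    Starts α k w → ∀ m : ℤ, k + w.length = m →
      tailVal α k * ((cfMatrix w).2.1 * tailVal α m + (cfMatrix w).2.2) =
        (cfMatrix w).1.1 * tailVal α m + (cfMatrix w).1.2 := by
  induction w with
  | nil =>
    rintro k - m rfl
    simp [cfMatrix]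
  | cons x w ih =>
    rintro k ⟨hx, hw⟩ m hm
    have := ih hw m (by rw [← hm, List.length_cons]; push_cast; ring)
    have ht := tailVal_pos h (k + 1)
    rw [tailVal_eq h k, hx]
    simp only [cfMatrix]
    push_cast
    rw [← this]
    field_simp
    linear_combination (x : ℝ) * this

/-! ### The periodic sequence attaining the lower endpoint -/

/-- The periodic sequence with period `2 11111 22 11 222 11 2`. -/
def lowerSeq (n : ℤ) : ℕ :=
  [2, 1, 1, 1, 1, 1, 2, 2, 1, 1, 2, 2, 2, 1, 1, 2].getD (n % 16).toNat 1

theorem lowerSeq_congr {m n : ℤ} (h : m % 16 = n % 16) : lowerSeq m = lowerSeq n := by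
  rw [lowerSeq, lowerSeq, h]

theorem forall_of_emod {p : ℤ → Prop} {d : ℕ} (hd : 0 < d) (hp : ∀ n, p (n % d) → p n)
    (h : ∀ r : Fin d, p r) (n : ℤ) : p n := by
  apply hp
  have h0 : (0 : ℤ) ≤ n % d := Int.emod_nonneg _ (by omega)
  have h1 : n % d < d := Int.emod_lt_of_pos _ (by omega)
  have := h ⟨(n % d).toNat, by omega⟩
  simpa [Int.toNat_of_nonneg h0] using this

theorem lowerSeq_digits (n : ℤ) : lowerSeq n = 1 ∨ lowerSeq n = 2 := by
  refine forall_of_emod (d := 16) (p := fun n => lowerSeq n = 1 ∨ lowerSeq n = 2) (by norm_num)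
    (fun n h => ?_) (by decide) n
  rwa [lowerSeq_congr (m := n % _) (n := n) (by simp)] at h

theorem lowerSeq_symm (n : ℤ) : lowerSeq (6 - n) = lowerSeq n := by
  refine forall_of_emod (d := 16) (p := fun n => lowerSeq (6 - n) = lowerSeq n) (by norm_num)
    (fun n h => ?_) (by decide) n
  rwa [lowerSeq_congr (m := n % _) (n := n) (by simp),
    lowerSeq_congr (m := 6 - n % _) (n := 6 - n) (by simp)] at h

theorem lowerSeq_pos (n : ℤ) : 0 < lowerSeq n := pos_of_digits lowerSeq_digits n

theorem sqrt_718341_sq : Real.sqrt 718341 ^ 2 = 718341 := Real.sq_sqrt (by norm_num)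

theorem tailVal_lowerSeq_zero : tailVal lowerSeq 0 = (6295 + 10 * Real.sqrt 718341) / 5638 := by
  have h := tailVal_mul_cfMatrix lowerSeq_pos
    (w := [2, 1, 1, 1, 1, 1, 2, 2, 1, 1, 2, 2, 2, 1, 1, 2]) (k := 0)
    (by simp [Starts, lowerSeq]) 16 (by norm_num)
  rw [tailVal_congr (k := 16) (l := 0) fun n => lowerSeq_congr (by omega)] at h
  have hp := tailVal_pos lowerSeq_pos 0
  norm_num [cfMatrix] at h
  have hs := sqrt_718341_sq
  have hb := sqrt_718341_bounds.1
  generalize Real.sqrt 718341 = s at *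
  generalize tailVal lowerSeq 0 = x at *
  have hx : (x - (6295 + 10 * s) / 5638) * (x - (6295 - 10 * s) / 5638) = 0 := by
    linear_combination h / 11276 - 100 / 5638 ^ 2 * hs
  rcases mul_eq_zero.1 hx with e | e
  · linarith
  · norm_num at hb
    linarith

theorem tailVal_lowerSeq_zero_eq :
    tailVal lowerSeq 0 * (21 * tailVal lowerSeq 7 + 8) = 55 * tailVal lowerSeq 7 + 21 := by
  have h := tailVal_mul_cfMatrix lowerSeq_pos (w := [2, 1, 1, 1, 1, 1, 2]) (k := 0)
    (by simp [Starts, lowerSeq]) 7 (by norm_num)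
  norm_num [cfMatrix] at h
  exact h

theorem tailVal_lowerSeq_zero_add :
    tailVal lowerSeq 0 + 1 / tailVal lowerSeq 7 = 10 * Real.sqrt 718341 / 2819 := by
  have h := tailVal_lowerSeq_zero_eq
  have hp := tailVal_pos lowerSeq_pos 7
  have h0 := tailVal_lowerSeq_zero
  have hs := sqrt_718341_sq
  have hb := sqrt_718341_bounds
  rw [h0] at h ⊢
  generalize Real.sqrt 718341 = s at *
  generalize tailVal lowerSeq 7 = y at *
  have hy : y = (2518 + 4 * s) / 2285 := by
    have h1 : (210 * s - 177895) * (y - (2518 + 4 * s) / 2285) = 0 := by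
      linear_combination 5638 * h - 840 / 2285 * hs
    rcases mul_eq_zero.1 h1 with e | e
    · norm_num at hb
      linarith
    · linarith
  have hs0 : 0 < s := by
    norm_num at hb
    linarith
  rw [hy]
  field_simp
  linear_combination -112760 * hs

theorem tailVal_le_lowerSeq {α : ℤ → ℕ} (h : Admissible α) {k : ℤ}
    (hw : Starts α k [2, 1, 1, 1, 1, 1, 2, 2]) : tailVal α k ≤ tailVal lowerSeq 0 := by
  by_contra! hlt
  obtain ⟨j, hj, hd⟩ := exists_first_diff h.pos lowerSeq_pos hlt
  simp only [zero_add] at hj hd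
  have h8 : 8 ≤ j := by
    by_contra! hc
    obtain ⟨e0, e1, e2, e3, e4, e5, e6, e7, -⟩ := hw
    simp only [add_assoc, Int.reduceAdd] at e0 e1 e2 e3 e4 e5 e6 e7
    interval_cases j <;> simp [lowerSeq, *] at hd
  have key : ∀ r : Fin 16,
      ((r : ℕ) % 2 = 0 ∧ lowerSeq r = 1 ∨ (r : ℕ) % 2 = 1 ∧ lowerSeq r = 2) →
      forces (fun _ _ => false) 0 []
        ((List.range 8).map (fun i : ℕ => lowerSeq (r + 8 + i)) ++ [3 - lowerSeq r]) = true := by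
    decide +kernel
  have hr : lowerSeq j = lowerSeq ((j % 16 : ℕ) : ℤ) := lowerSeq_congr (by omega)
  have hαj := h.digits (k + j)
  have hPj := lowerSeq_digits j
  refine h.not_starts (key ⟨j % 16, by omega⟩ ?_) (k + j - 8) ?_
  · simp only [← hr]
    omega
  · refine starts_concat (starts_ofFn _ 8 fun i hi => ?_) ?_
    · have := hj (j - 8 + i) (by omega)
      rw [show k + j - 8 + i = k + ((j - 8 + i : ℕ) : ℤ) by omega, this]
      exact lowerSeq_congr (by simp only; omega)
    · simp only [List.length_map, List.length_range, ← hr]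
      rw [show k + j - 8 + ((8 : ℕ) : ℤ) = k + j by omega]
      omega

/-- Around a word `22 11111 22` the value at the last digit of the first `22` is at most the lower
endpoint. -/
theorem lambdaVal_le_lower {α : ℤ → ℕ} (h : Admissible α) {k : ℤ}
    (hw : Starts α (k - 1) [2, 2, 1, 1, 1, 1, 1, 2, 2]) :
    lambdaVal α k ≤ 10 * Real.sqrt 718341 / 2819 := by
  have h1 : Starts α k [2, 1, 1, 1, 1, 1, 2, 2] := by simpa using hw.2
  have h2 := hw.revSeq
  simp only [List.reverse_cons, List.reverse_nil, List.nil_append, List.cons_append,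
    List.length_cons, List.length_nil] at h2
  have h3 : Starts (revSeq α) (-k - 6) [2, 1, 1, 1, 1, 1, 2, 2] := by
    have := h2.2
    rwa [show 1 - (k - 1) - ((0 + 1 + 1 + 1 + 1 + 1 + 1 + 1 + 1 + 1 : ℕ) : ℤ) + 1 = -k - 6 by
      push_cast; ring] at this
  have t1 := tailVal_le_lowerSeq h h1
  have t2 := tailVal_le_lowerSeq h.revSeq h3
  have h4 := tailVal_mul_cfMatrix h.revSeq.pos (w := [2, 1, 1, 1, 1, 1, 2])
    (h3.of_isPrefixOf rfl) (1 - k) (by simp; ring)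
  norm_num [cfMatrix] at h4
  rw [lambdaVal_eq h.pos, ← tailVal_lowerSeq_zero_add]
  have hp := tailVal_pos h.revSeq.pos (1 - k)
  have hp7 := tailVal_pos lowerSeq_pos 7
  have hle : tailVal lowerSeq 7 ≤ tailVal (revSeq α) (1 - k) := by
    have e := tailVal_lowerSeq_zero_eq
    rw [← eq_div_iff (by positivity)] at e h4
    rw [e, h4, div_le_div_iff₀ (by positivity) (by positivity)] at t2
    linarith
  exact add_le_add t1 (one_div_le_one_div_of_le hp7 hle)

theorem lambdaVal_le_lower_of_mirror {α : ℤ → ℕ} (h : Admissible α) {k : ℤ}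
    (hw : Starts α (k - 7) [2, 2, 1, 1, 1, 1, 1, 2, 2]) :
    lambdaVal α k ≤ 10 * Real.sqrt 718341 / 2819 := by
  rw [← lambdaVal_revSeq h.pos]
  refine lambdaVal_le_lower h.revSeq ?_
  have := hw.revSeq
  simp only [List.reverse_cons, List.reverse_nil, List.nil_append, List.cons_append,
    List.length_cons, List.length_nil] at this
  convert this using 1
  push_cast
  ring

/-! ### Chains of blocks `22 111` -/

/-- The words `l` and `r` around a position contain `w`, with `i` letters to the left. -/
def readsAt (w : List ℕ) (i : ℕ) (l r : List ℕ) : Bool :=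
  (w.take i).reverse.isPrefixOf l && (w.drop i).isPrefixOf r

theorem Around.starts_of_readsAt {α : ℤ → ℕ} {k : ℤ} {l r w : List ℕ} {i : ℕ}
    (h : Around α k l r) (hi : i ≤ w.length) (hw : readsAt w i l r = true) :
    Starts α (k - i) w := by
  rw [readsAt, Bool.and_eq_true] at hw
  have h' : Around α k (w.take i).reverse (w.drop i) := ⟨h.1.of_isPrefixOf hw.2, h.2.of_isPrefixOf hw.1⟩
  simpa [min_eq_left hi] using h'.starts

/-- Three consecutive blocks `22` separated by `111`. -/
abbrev tripleWord : List ℕ := [2, 2, 1, 1, 1, 2, 2, 1, 1, 1, 2, 2]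

theorem exists_tripleWord {α : ℤ → ℕ} (h : Admissible α) {k : ℤ}
    (hk : 10 * Real.sqrt 718341 / 2819 < lambdaVal α k) : ∃ m, Starts α m tripleWord := by
  obtain ⟨l, r, hm, hs⟩ := h.exists_of_forces (k := k)
    (fun l r => lambdaLe 300656260562 100000000000 l r ||
      readsAt [2, 2, 1, 1, 1, 1, 1, 2, 2] 1 l r || readsAt [2, 2, 1, 1, 1, 1, 1, 2, 2] 7 l r ||
      (List.range 13).any fun i => readsAt tripleWord i l r) 22 [] [] ⟨trivial, trivial⟩
    (by decide +kernel)
  simp only [Bool.or_eq_true, List.any_eq_true, List.mem_range] at hs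
  rcases hs with ((hs | hs) | hs) | ⟨i, hi, hs⟩
  · have h1 := lambdaVal_le_of_lambdaLe h.digits hm (by norm_num) hs
    have h2 := sqrt_718341_bounds.1
    norm_num at h1 h2
    linarith
  · exact absurd (lambdaVal_le_lower h (hm.starts_of_readsAt (by simp) hs)) hk.not_ge
  · exact absurd (lambdaVal_le_lower_of_mirror h (hm.starts_of_readsAt (by simp) hs)) hk.not_ge
  · exact ⟨_, hm.starts_of_readsAt (by simp only [List.length_cons, List.length_nil]; omega) hs⟩

theorem tripleWord_succ {α : ℤ → ℕ} (h : Admissible α) {k : ℤ} (hk : Starts α k tripleWord) :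
    Starts α k (tripleWord ++ [1, 1, 1, 2, 2]) ∨
      Starts α k (tripleWord ++ [1, 1, 1, 1, 1, 2, 2]) := by
  obtain ⟨l, r, hm, hs⟩ := h.exists_of_forces (k := k)
    (fun l r => readsAt (tripleWord ++ [1, 1, 1, 2, 2]) 0 l r ||
      readsAt (tripleWord ++ [1, 1, 1, 1, 1, 2, 2]) 0 l r) 14 [] tripleWord ⟨hk, trivial⟩
    (by decide +kernel)
  rw [Bool.or_eq_true] at hs
  rcases hs with hs | hs
  · left
    simpa using hm.starts_of_readsAt (by simp) hs
  · right
    simpa using hm.starts_of_readsAt (by simp) hs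

theorem Starts.revSeq_tripleWord {α : ℤ → ℕ} {k : ℤ} (hk : Starts α k tripleWord) :
    Starts (_root_.revSeq α) (-k - 11) tripleWord := by
  have := hk.revSeq
  simp only [List.reverse_cons, List.reverse_nil, List.nil_append, List.cons_append,
    List.length_cons, List.length_nil] at this
  convert this using 1
  push_cast
  ring

theorem lambdaVal_tripleWord {α : ℤ → ℕ} (h : ∀ n, 0 < α n) {k : ℤ}
    (hk : Starts α k tripleWord) :
    lambdaVal α (k + 1) = (505 * tailVal α (k + 11) + 192) / (192 * tailVal α (k + 11) + 73) +
      1 / tailVal (revSeq α) (-k) := by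
  have h1 := tailVal_mul_cfMatrix h (w := [2, 1, 1, 1, 2, 2, 1, 1, 1, 2])
    (hk.2.of_isPrefixOf rfl) (k + 11) (by simp; ring)
  have hp := tailVal_pos h (k + 11)
  norm_num [cfMatrix] at h1
  rw [lambdaVal_eq h, show 1 - (k + 1) = -k by ring, eq_div_iff (by positivity) |>.2 h1]

theorem upper_eq :
    (505 * tailVal lowerSeq 0 + 192) / (192 * tailVal lowerSeq 0 + 73) + 1 / tailVal lowerSeq 0 =
      (14264157401 + 16294182 * Real.sqrt 718341) / 9321104530 := by
  rw [tailVal_lowerSeq_zero]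
  have hs := sqrt_718341_sq
  have hs0 := Real.sqrt_nonneg 718341
  generalize Real.sqrt 718341 = s at *
  have h1 : 0 < 6295 + 10 * s := by positivity
  field_simp
  linear_combination (-264094662608480 - 312848294400 * s) * hs

theorem upper_le_of_le {S T : ℝ} (hS : 0 < S) (hST : S ≤ T) (hT : T ≤ tailVal lowerSeq 0) :
    (14264157401 + 16294182 * Real.sqrt 718341) / 9321104530 ≤
      (505 * T + 192) / (192 * T + 73) + 1 / S := by
  rw [← upper_eq]
  have hT0 : 0 < T := hS.trans_le hST
  have h1 := one_div_le_one_div_of_le hS hST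
  have hx : 0 < tailVal lowerSeq 0 := hT0.trans_le hT
  generalize tailVal lowerSeq 0 = x at *
  have e : (505 * T + 192) / (192 * T + 73) + 1 / T -
      ((505 * x + 192) / (192 * x + 73) + 1 / x) =
      (x - T) * (1 / (T * x) - 1 / ((192 * T + 73) * (192 * x + 73))) := by
    field_simp
    ring
  have h2 : 1 / ((192 * T + 73) * (192 * x + 73)) ≤ 1 / (T * x) :=
    one_div_le_one_div_of_le (by positivity) (by nlinarith [mul_pos hT0 hx])
  have h3 := mul_nonneg (sub_nonneg.2 hT) (sub_nonneg.2 h2)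
  linarith

theorem not_starts_tripleWord_end {α : ℤ → ℕ} (h : Admissible α) {k : ℤ} :
    ¬ Starts α k (tripleWord ++ [1, 1, 1, 1, 1, 2, 2]) := by
  intro hk
  have hY := (starts_append.1 hk).1
  have hR := hY.revSeq_tripleWord
  rcases tripleWord_succ h.revSeq hR with hl | hl
  · refine h.not_starts (n := 8)
      (w := [2, 2, 1, 1, 1] ++ (tripleWord ++ [1, 1, 1, 1, 1, 2, 2]))
      (by decide +kernel) (k - 5) (starts_append.2 ⟨?_, ?_⟩)
    · have := (starts_append.1 hl).2.revSeq
      rw [revSeq_revSeq] at this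
      simp only [List.reverse_cons, List.reverse_nil, List.nil_append, List.cons_append,
        List.length_cons, List.length_nil] at this
      convert this using 1
      push_cast
      ring
    · simpa using hk
  · have hT : Starts α (k + 11) [2, 1, 1, 1, 1, 1, 2, 2] := by
      simpa using (starts_append (u := tripleWord.take 11)
        (v := [2, 1, 1, 1, 1, 1, 2, 2]).1 hk).2
    have hS : Starts (revSeq α) (-k) [2, 1, 1, 1, 1, 1, 2, 2] := by
      simpa using (starts_append (u := tripleWord.take 11)
        (v := [2, 1, 1, 1, 1, 1, 2, 2]).1 hl).2
    have h1 := tailVal_le_lowerSeq h hT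
    have h2 := tailVal_le_lowerSeq h.revSeq hS
    have h3 := h.lt (k + 1)
    have h4 := h.revSeq.lt (-k - 11 + 1)
    rw [lambdaVal_tripleWord h.pos hY] at h3
    rw [lambdaVal_tripleWord h.revSeq.pos hR, revSeq_revSeq, show -k - 11 + 11 = -k by ring,
      show -(-k - 11) = k + 11 by ring] at h4
    rcases le_total (tailVal α (k + 11)) (tailVal (revSeq α) (-k)) with hle | hle
    · exact absurd (upper_le_of_le (tailVal_pos h.pos _) hle h2) h4.not_ge
    · exact absurd (upper_le_of_le (tailVal_pos h.revSeq.pos _) hle h1) h3.not_ge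

theorem tripleWord_add_five {α : ℤ → ℕ} (h : Admissible α) {k : ℤ}
    (hk : Starts α k tripleWord) : Starts α (k + 5) tripleWord :=
  (starts_append (u := [2, 2, 1, 1, 1])).1
    ((tripleWord_succ h hk).resolve_right (not_starts_tripleWord_end h)) |>.2

theorem tripleWord_sub_five {α : ℤ → ℕ} (h : Admissible α) {k : ℤ}
    (hk : Starts α k tripleWord) : Starts α (k - 5) tripleWord := by
  have := (tripleWord_add_five h.revSeq hk.revSeq_tripleWord).revSeq_tripleWord
  rwa [revSeq_revSeq, show -(-k - 11 + 5) - 11 = k - 5 by ring] at this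

/-- The periodic sequence with period `22 111`. -/
def middleSeq (n : ℤ) : ℕ := [2, 2, 1, 1, 1].getD (n % 5).toNat 1

theorem eq_middleSeq {α : ℤ → ℕ} (h : Admissible α) {k : ℤ} (hk : Starts α k tripleWord)
    (n : ℤ) : α (k + n) = middleSeq n := by
  have hz : ∀ z : ℤ, Starts α (k + 5 * z) tripleWord := by
    intro z
    induction z using Int.induction_on with
    | zero => simpa using hk
    | succ i ih =>
      have := tripleWord_add_five h ih
      rwa [show k + 5 * (i : ℤ) + 5 = k + 5 * (i + 1) by ring] at this
    | pred i ih =>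
      have := tripleWord_sub_five h ih
      rwa [show k + 5 * -(i : ℤ) - 5 = k + 5 * (-i - 1) by ring] at this
  obtain ⟨e0, e1, e2, e3, e4, -⟩ := hz (n / 5)
  have h0 : 0 ≤ n % 5 := Int.emod_nonneg _ (by norm_num)
  have h5 : n % 5 < 5 := Int.emod_lt_of_pos _ (by norm_num)
  have hn : k + n = k + 5 * (n / 5) + n % 5 := by omega
  simp only [add_assoc, Int.reduceAdd] at e0 e1 e2 e3 e4
  rw [hn, middleSeq]
  generalize n % 5 = r at *
  interval_cases r <;> simp [add_assoc, *]

/-! ### The three points of the spectrum -/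

/-- Certificate that `λ_k(β) ≤ N / D`, using the digits at distance at most `8` from `k`. -/
def windowLe (β : ℤ → ℕ) (N D : ℕ) (k : ℤ) : Bool :=
  lambdaLe N D ((List.range 8).map fun i : ℕ => β (k + (-1 - i)))
    ((List.range 8).map fun i : ℕ => β (k + i))

theorem lambdaVal_le_of_windowLe {α β : ℤ → ℕ} (h : ∀ n, α n = 1 ∨ α n = 2) {k l : ℤ} {N D : ℕ}
    (hαβ : ∀ i : ℤ, -8 ≤ i → i < 8 → α (k + i) = β (l + i)) (hD : 0 < D)
    (hc : windowLe β N D l = true) : lambdaVal α k ≤ (N : ℝ) / D := by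
  refine lambdaVal_le_of_lambdaLe h ⟨starts_ofFn _ 8 fun i hi => ?_, starts_ofFn _ 8 fun i hi => ?_⟩
    hD hc
  · exact hαβ i (by omega) (by omega)
  · rw [← hαβ (-1 - i) (by omega) (by omega), revSeq]
    congr 1
    ring

theorem mem_markovSpectrum_of_max {α : ℤ → ℕ} (h : ∀ n, 0 < α n) {k : ℤ} {x : ℝ}
    (hle : ∀ n, lambdaVal α n ≤ x) (hk : lambdaVal α k = x) : x ∈ markovSpectrum := by
  have hb : BddAbove (range (lambdaVal α)) := ⟨x, by rintro _ ⟨n, rfl⟩; exact hle n⟩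
  exact ⟨α, h, hb, le_antisymm (ciSup_le hle) (hk ▸ le_ciSup hb k)⟩

theorem lambdaVal_of_symm {α : ℤ → ℕ} (h : ∀ n, 0 < α n) {c : ℤ} (hc : ∀ n, α (c - n) = α n)
    (k : ℤ) : lambdaVal α (c - k) = lambdaVal α k := by
  rw [← lambdaVal_revSeq h k]
  refine lambdaVal_congr fun n => ?_
  rw [revSeq, ← hc (-(-k + n))]
  congr 1
  ring

theorem tailVal_revSeq_of_symm {α : ℤ → ℕ} {c : ℤ} (hc : ∀ n, α (c - n) = α n)
    (k : ℤ) : tailVal (revSeq α) k = tailVal α (c + k) := by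
  refine tailVal_congr fun n => ?_
  rw [revSeq, ← hc]
  congr 1
  ring

theorem lower_mem_markovSpectrum : 10 * Real.sqrt 718341 / 2819 ∈ markovSpectrum := by
  have h0 : lambdaVal lowerSeq 0 = 10 * Real.sqrt 718341 / 2819 := by
    rw [lambdaVal_eq lowerSeq_pos, tailVal_revSeq_of_symm lowerSeq_symm,
      ← tailVal_lowerSeq_zero_add]
    norm_num
  have h6 : lambdaVal lowerSeq 6 = 10 * Real.sqrt 718341 / 2819 := by
    rw [← h0, ← lambdaVal_of_symm lowerSeq_pos lowerSeq_symm 0, sub_zero]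
  refine mem_markovSpectrum_of_max lowerSeq_pos (k := 0) (fun n => ?_) h0
  refine forall_of_emod (d := 16)
    (p := fun n => lambdaVal lowerSeq n ≤ 10 * Real.sqrt 718341 / 2819) (by norm_num)
    (fun n h => ?_) (fun r => ?_) n
  · rwa [lambdaVal_congr (k := n) (l := n % (16 : ℕ))]
    exact fun m => lowerSeq_congr (by simp)
  · have key : ∀ r : Fin 16, (r : ℤ) = 0 ∨ (r : ℤ) = 6 ∨ windowLe lowerSeq 3006 1000 r = true := by
      decide +kernel
    rcases key r with e | e | e
    · rw [e, h0]
    · rw [e, h6]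
    · have h1 := lambdaVal_le_of_windowLe lowerSeq_digits (fun _ _ _ => rfl) (by norm_num) e
      have h2 := sqrt_718341_bounds.1
      norm_num at h1 h2
      linarith

theorem middleSeq_congr {m n : ℤ} (h : m % 5 = n % 5) : middleSeq m = middleSeq n := by
  rw [middleSeq, middleSeq, h]

theorem middleSeq_digits (n : ℤ) : middleSeq n = 1 ∨ middleSeq n = 2 := by
  refine forall_of_emod (d := 5) (p := fun n => middleSeq n = 1 ∨ middleSeq n = 2) (by norm_num)
    (fun n h => ?_) (by decide) n
  rwa [middleSeq_congr (m := n % _) (n := n) (by simp)] at h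

theorem middleSeq_symm (n : ℤ) : middleSeq (1 - n) = middleSeq n := by
  refine forall_of_emod (d := 5) (p := fun n => middleSeq (1 - n) = middleSeq n) (by norm_num)
    (fun n h => ?_) (by decide) n
  rwa [middleSeq_congr (m := n % _) (n := n) (by simp),
    middleSeq_congr (m := 1 - n % _) (n := 1 - n) (by simp)] at h

theorem middleSeq_pos (n : ℤ) : 0 < middleSeq n := pos_of_digits middleSeq_digits n

theorem sqrt_145_bounds : 12.0415 < Real.sqrt 145 ∧ Real.sqrt 145 < 12.0416 := by
  constructor
  · exact Real.lt_sqrt_of_sq_lt (by norm_num)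
  · rw [Real.sqrt_lt' (by norm_num)]
    norm_num

theorem lambdaVal_middleSeq_one : lambdaVal middleSeq 1 = Real.sqrt 145 / 4 := by
  have h := tailVal_mul_cfMatrix middleSeq_pos (w := [2, 1, 1, 1, 2]) (k := 1)
    (by simp [Starts, middleSeq]) 6 (by norm_num)
  rw [tailVal_congr (k := 6) (l := 1) fun n => middleSeq_congr (by omega)] at h
  have hp := tailVal_pos middleSeq_pos 1
  norm_num [cfMatrix] at h
  rw [lambdaVal_eq middleSeq_pos, tailVal_revSeq_of_symm middleSeq_symm]
  norm_num
  have hs : Real.sqrt 145 ^ 2 = 145 := Real.sq_sqrt (by norm_num)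
  have hb := sqrt_145_bounds.1
  generalize Real.sqrt 145 = s at *
  generalize tailVal middleSeq 1 = x at *
  have hx : (x - (9 + s) / 8) * (x - (9 - s) / 8) = 0 := by
    linear_combination h / 8 - 1 / 64 * hs
  norm_num at hb
  rcases mul_eq_zero.1 hx with e | e
  · have hx : x = (9 + s) / 8 := by linarith
    have hs0 : 0 < 9 + s := by linarith
    rw [hx]
    field_simp
    linear_combination -4 * hs
  · linarith

theorem lambdaVal_middleSeq_le (n : ℤ) : lambdaVal middleSeq n ≤ Real.sqrt 145 / 4 := by
  have h1 := lambdaVal_middleSeq_one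
  have h0 : lambdaVal middleSeq 0 = Real.sqrt 145 / 4 := by
    rw [← h1, ← lambdaVal_of_symm middleSeq_pos middleSeq_symm 0, sub_zero]
  refine forall_of_emod (d := 5)
    (p := fun n => lambdaVal middleSeq n ≤ Real.sqrt 145 / 4) (by norm_num)
    (fun n h => ?_) (fun r => ?_) n
  · rwa [lambdaVal_congr (k := n) (l := n % (5 : ℕ))]
    exact fun m => middleSeq_congr (by simp)
  · have key : ∀ r : Fin 5, (r : ℤ) = 0 ∨ (r : ℤ) = 1 ∨ windowLe middleSeq 3 1 r = true := by
      decide +kernel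
    rcases key r with e | e | e
    · rw [e, h0]
    · rw [e, h1]
    · have h2 := lambdaVal_le_of_windowLe middleSeq_digits (fun _ _ _ => rfl) (by norm_num) e
      have h3 := sqrt_145_bounds.1
      norm_num at h2 h3
      linarith

/-- The symmetric sequence which reads `tripleWord` at `0` and coincides with the periodic sequence
of the lower endpoint on both sides of it. -/
def upperSeq (n : ℤ) : ℕ :=
  if n < 0 then lowerSeq (-n) else if n < 11 then tripleWord.getD n.toNat 1 else lowerSeq (n - 11)

theorem upperSeq_of_ge {n : ℤ} (h : 11 ≤ n) : upperSeq n = lowerSeq (n - 11) := by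
  rw [upperSeq, if_neg (by omega), if_neg (by omega)]

theorem upperSeq_symm (n : ℤ) : upperSeq (11 - n) = upperSeq n := by
  rcases lt_or_ge n 0 with h | h
  · rw [upperSeq_of_ge (by omega), upperSeq, if_pos h]
    congr 1
    ring
  · rcases lt_or_ge 11 n with h' | h'
    · rw [upperSeq_of_ge h'.le, upperSeq, if_pos (by omega)]
      congr 1
      ring
    · interval_cases n <;> decide

theorem upperSeq_digits (n : ℤ) : upperSeq n = 1 ∨ upperSeq n = 2 := by
  rcases lt_or_ge n 0 with h | h
  · rw [upperSeq, if_pos h]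
    exact lowerSeq_digits _
  · rcases lt_or_ge n 11 with h' | h'
    · interval_cases n <;> decide
    · rw [upperSeq_of_ge h']
      exact lowerSeq_digits _

theorem upperSeq_pos (n : ℤ) : 0 < upperSeq n := pos_of_digits upperSeq_digits n

theorem upper_mem_markovSpectrum :
    (14264157401 + 16294182 * Real.sqrt 718341) / 9321104530 ∈ markovSpectrum := by
  have ht : tailVal upperSeq 11 = tailVal lowerSeq 0 := tailVal_congr fun n => by
    rw [upperSeq_of_ge (by omega)]
    congr 1
    ring
  have h1 : lambdaVal upperSeq 1 =
      (14264157401 + 16294182 * Real.sqrt 718341) / 9321104530 := by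
    have := lambdaVal_tripleWord upperSeq_pos (k := 0) (by simp [Starts, upperSeq, lowerSeq])
    rw [tailVal_revSeq_of_symm upperSeq_symm] at this
    norm_num only at this
    rw [this, ht, upper_eq]
  have hb := sqrt_718341_bounds.1
  norm_num at hb
  have hge : ∀ n, 6 ≤ n → lambdaVal upperSeq n ≤
      (14264157401 + 16294182 * Real.sqrt 718341) / 9321104530 := by
    intro n hn
    suffices hs : n = 10 ∨ lambdaVal upperSeq n ≤ ((3011 : ℕ) : ℝ) / (1000 : ℕ) by
      rcases hs with rfl | hs
      · rw [← h1, ← lambdaVal_of_symm upperSeq_pos upperSeq_symm 1]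
        norm_num
      · norm_num at hs
        linarith
    rcases lt_or_ge n 19 with h | h
    · have key : ∀ r : Fin 13, (r : ℤ) + 6 = 10 ∨ windowLe upperSeq 3011 1000 (r + 6) = true := by
        decide +kernel
      have := key ⟨(n - 6).toNat, by omega⟩
      rw [show (((⟨(n - 6).toNat, by omega⟩ : Fin 13) : ℕ) : ℤ) + 6 = n by simp only; omega] at this
      exact this.imp_right fun e =>
        lambdaVal_le_of_windowLe upperSeq_digits (fun _ _ _ => rfl) (by norm_num) e
    · right
      have key : ∀ r : Fin 16, windowLe lowerSeq 3011 1000 r = true := by decide +kernel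
      refine lambdaVal_le_of_windowLe upperSeq_digits (fun i hi _ => ?_) (by norm_num)
        (key ⟨((n - 11) % 16).toNat, by omega⟩)
      rw [upperSeq_of_ge (by omega)]
      exact lowerSeq_congr (by simp only; omega)
  refine mem_markovSpectrum_of_max upperSeq_pos (k := 1) (fun n => ?_) h1
  rcases le_or_gt 6 n with h | h
  · exact hge n h
  · rw [← lambdaVal_of_symm upperSeq_pos upperSeq_symm]
    exact hge _ (by omega)

theorem digits_of_lambdaVal_lt {α : ℤ → ℕ} (h : ∀ n, 0 < α n)
    (hlt : ∀ k, lambdaVal α k < 7 / 2) (n : ℤ) : α n = 1 ∨ α n = 2 := by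
  have h3 : ∀ n, α n ≤ 3 := fun n => by
    have h1 := hlt n
    rw [lambdaVal_eq h] at h1
    have h2 := lt_tailVal h n
    have h4 : 0 < 1 / tailVal (revSeq α) (1 - n) := one_div_pos.2 (tailVal_pos (revSeq_pos h) _)
    have : (α n : ℝ) < 4 := by linarith
    exact Nat.lt_succ_iff.1 (by exact_mod_cast this)
  have h4 : ∀ {β : ℤ → ℕ} (_ : ∀ n, 0 < β n) (_ : ∀ n, β n ≤ 3) (k : ℤ),
      1 / 4 ≤ 1 / tailVal β k := fun {β} hβ hβ3 k => by
    have h5 := tailVal_lt_add_one hβ k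
    have h6 : (β k : ℝ) ≤ 3 := by exact_mod_cast hβ3 k
    exact one_div_le_one_div_of_le (tailVal_pos hβ k) (by linarith)
  have h5 := hlt n
  rw [lambdaVal_eq' h] at h5
  have h6 := h4 h h3 (n + 1)
  have h7 := h4 (revSeq_pos h) (fun m => h3 (-m)) (1 - n)
  have h8 : (α n : ℝ) < 3 := by linarith
  have h9 : α n < 3 := by exact_mod_cast h8
  have := h n
  omega

theorem markovValue_eq_of_middleSeq {α : ℤ → ℕ} {k : ℤ}
    (h : ∀ n, α (k + n) = middleSeq n) : markovValue α = Real.sqrt 145 / 4 := by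
  have hl : ∀ n, lambdaVal α n = lambdaVal middleSeq (n - k) := fun n =>
    lambdaVal_congr fun m => by rw [← h]; congr 1; ring
  have hle : ∀ n, lambdaVal α n ≤ Real.sqrt 145 / 4 := fun n => by
    rw [hl]
    exact lambdaVal_middleSeq_le _
  refine le_antisymm (ciSup_le hle) ?_
  rw [← lambdaVal_middleSeq_one, show (1 : ℤ) = k + 1 - k by ring, ← hl]
  exact le_ciSup (f := lambdaVal α) ⟨_, by rintro _ ⟨n, rfl⟩; exact hle n⟩ (k + 1)

/-- The intersection of the Markov spectrum with the open interval consists of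
exactly one (hence isolated) point, and both endpoints belong to the Markov
spectrum. -/
theorem markov_gap_14 :
    markovSpectrum ∩ Ioo (10 * Real.sqrt 718341 / 2819) ((14264157401 + 16294182 * Real.sqrt 718341) / 9321104530) = {(Real.sqrt 145 / 4 : ℝ)} ∧
    (10 * Real.sqrt 718341 / 2819) ∈ markovSpectrum ∧ ((14264157401 + 16294182 * Real.sqrt 718341) / 9321104530) ∈ markovSpectrum := by
  have hb := sqrt_718341_bounds
  have hc := sqrt_145_bounds
  norm_num at hb hc
  refine ⟨Subset.antisymm ?_ ?_, lower_mem_markovSpectrum, upper_mem_markovSpectrum⟩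
  · rintro _ ⟨⟨α, hpos, hbdd, rfl⟩, hlo, hup⟩
    have hlt : ∀ k, lambdaVal α k <
        (14264157401 + 16294182 * Real.sqrt 718341) / 9321104530 :=
      fun k => (le_ciSup hbdd k).trans_lt hup
    have hadm : Admissible α :=
      ⟨digits_of_lambdaVal_lt hpos fun k => (hlt k).trans (by linarith), hlt⟩
    obtain ⟨k, hk⟩ := exists_lt_of_lt_ciSup hlo
    obtain ⟨m, hm⟩ := exists_tripleWord hadm hk
    exact markovValue_eq_of_middleSeq (eq_middleSeq hadm hm)
  · rintro _ rfl
    refine ⟨mem_markovSpectrum_of_max middleSeq_pos lambdaVal_middleSeq_le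
      lambdaVal_middleSeq_one, ?_, ?_⟩ <;> linarith
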